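/- arXiv:1202.4396 — 5 statements merged into one kernel-verified Lean document; each statement's English description precedes it below -/
import Mathlib

section
/- Any ring homomorphism d : AH1 → ℝ with d(x) > 0 for every basis element x satisfies d(1) = 1, d(ψ) = (3+√17)/2, d(χ) = (5+√17)/2, d(σ) = (7+√17)/2, d(ζ) = 4+√17, and d(τ) = (11+3√17)/2. -/
/-!
Write `p, c, s, z, t` for the images of `ψ, χ, σ, ζ, τ`. The products of `ψ` with the basis
express everything through `p`: the table gives `z = p² - p - 1`, then `s = p (p - 2)`
(after cancelling `p + 1`), `t = (p - 1) (p² - 2 p - 1)` and `c = p² - 2 p - 1` (after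
cancelling `p - 1`, nonzero as `t > 0`). Since `s > 0`, also `p ≠ 2`, so the relation for `ψτ`, which reads
`p (p - 2) (p² - 3 p - 2) = 0`, leaves `p² = 3 p + 2`, whose positive root is `(3 + √17) / 2`.
-/

/-- Any ring homomorphism `d : AH1 → ℝ` which is positive on every basis
element satisfies `d 1 = 1`, `d ψ = (3+√17)/2`, `d χ = (5+√17)/2`, `d σ = (7+√17)/2`,
`d ζ = 4+√17` and `d τ = (11+3√17)/2`.  Here `AH1` is any ring containing elements
`ψ, χ, σ, ζ, τ` satisfying the full `AH1` multiplication table. -/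
theorem AH1_frobeniusPerron_dimensions
    (A : Type) [Ring A] (ψ χ σ ζ τ : A)
    (hψψ : ψ * ψ = 1 + ψ + ζ)
    (hψχ : ψ * χ = χ + τ)
    (hψσ : ψ * σ = ζ + τ)
    (hψζ : ψ * ζ = ψ + σ + ζ + τ)
    (hψτ : ψ * τ = χ + σ + ζ + 2 * τ)
    (hχχ : χ * χ = 1 + ψ + χ + τ)
    (hχσ : χ * σ = σ + ζ + τ)
    (hχζ : χ * ζ = σ + ζ + 2 * τ)
    (hχτ : χ * τ = ψ + χ + σ + 2 * ζ + 2 * τ)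
    (hσσ : σ * σ = 1 + χ + σ + ζ + τ)
    (hσζ : σ * ζ = ψ + χ + σ + ζ + 2 * τ)
    (hστ : σ * τ = ψ + χ + σ + 2 * ζ + 3 * τ)
    (hζζ : ζ * ζ = 1 + ψ + χ + σ + 2 * ζ + 3 * τ)
    (hζτ : ζ * τ = ψ + 2 * χ + 2 * σ + 3 * ζ + 4 * τ)
    (hττ : τ * τ = 1 + 2 * ψ + 2 * χ + 3 * σ + 4 * ζ + 6 * τ)
    (d : A →+* ℝ)
    (hd1 : 0 < d 1) (hdψ : 0 < d ψ) (hdχ : 0 < d χ)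
    (hdσ : 0 < d σ) (hdζ : 0 < d ζ) (hdτ : 0 < d τ) :
    d 1 = 1 ∧ d ψ = (3 + Real.sqrt 17) / 2 ∧ d χ = (5 + Real.sqrt 17) / 2 ∧
      d σ = (7 + Real.sqrt 17) / 2 ∧ d ζ = 4 + Real.sqrt 17 ∧
      d τ = (11 + 3 * Real.sqrt 17) / 2 := by
  have h1 := congrArg d hψψ
  have h2 := congrArg d hψχ
  have h3 := congrArg d hψσ
  have h4 := congrArg d hψζ
  have h5 := congrArg d hψτ
  simp only [map_mul, map_add, map_one, map_ofNat] at h1 h2 h3 h4 h5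
  generalize d ψ = p at *
  generalize d χ = c at *
  generalize d σ = s at *
  generalize d ζ = z at *
  generalize d τ = t at *
  have hz : z = p * p - p - 1 := by linarith
  have hs : s = p * (p - 2) := by
    have hp1 : p + 1 ≠ 0 := by positivity
    apply mul_left_cancel₀ hp1
    subst hz
    linear_combination h3 - h4
  have ht : t = (p - 1) * (p ^ 2 - 2 * p - 1) := by
    subst hz hs
    linear_combination -h3
  have hp1 : p - 1 ≠ 0 := by
    intro h
    rw [h, zero_mul] at ht
    exact hdτ.ne' ht
  have hc : c = p ^ 2 - 2 * p - 1 := by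
    apply mul_left_cancel₀ hp1
    linear_combination h2 + ht
  have hp2 : p - 2 ≠ 0 := by
    intro h
    rw [h, mul_zero] at hs
    exact hdσ.ne' hs
  have hq : p ^ 2 - 3 * p - 2 = 0 := by
    apply mul_left_cancel₀ (mul_ne_zero hdψ.ne' hp2)
    subst hz hs ht hc
    linear_combination h5
  have h17 : √(17 : ℝ) * √17 = 17 := Real.mul_self_sqrt (by norm_num)
  have hsq : 3 < √(17 : ℝ) := Real.lt_sqrt_of_sq_lt (by norm_num)
  have hp : p = (3 + √17) / 2 := by
    -- The other root `(3 - √17) / 2` is negative since `√17 > 3`.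
    have hne : p - (3 - √17) / 2 ≠ 0 := by
      have : 0 < p - (3 - √17) / 2 := by linarith
      exact this.ne'
    apply sub_eq_zero.mp
    apply mul_left_cancel₀ hne
    linear_combination hq - h17 / 4
  refine ⟨map_one d, hp, ?_, ?_, ?_, ?_⟩
  · linear_combination hc + hq + hp
  · linear_combination hs + hq + hp
  · linear_combination hz + hq + 2 * hp
  · linear_combination ht + p * hq + 3 * hp
end

section
/- Any ring homomorphism d : AH2 → ℝ with d(x) > 0 for every basis element x satisfies d(1) = d(α) = 1, d(ρ) = d(αρ) = d(ρα) = d(αρα) = (3+√17)/2, d(π) = d(απ) = 4+√17, and d(η) = 5+√17. -/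
/-!
Write `r, p, e` for the images of `ρ, π, η`. Positivity and `α² = 1` force `d α = 1`. Then
`ραρ = αρα + η` and `ρ² = 1 + ρ + π` give `r² = r + e = 1 + r + p`, so `e = 1 + p` and
`p = r² - r - 1`. Substituting in `ρπ = ρ + π + απ + η` yields
`(r - 1) (r² - 3r - 2) = 0`. The root `r = 1` would give `p = -1 < 0`, so `r` is the positive
root `(3 + √17) / 2` of `r² - 3r - 2`, whence `p = 2r + 1` and `e = 2r + 2`.
-/

/-- Any ring homomorphism `d : AH2 → ℝ` which is positive on every basis
element satisfies `d 1 = d α = 1`, `d ρ = d (αρ) = d (ρα) = d (αρα) = (3+√17)/2`,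
`d π = d (απ) = 4+√17` and `d η = 5+√17`.  Here `AH2` is any ring containing elements
`α, ρ, π, η` satisfying the defining `AH2` relations, and the remaining basis elements are
the words `αρ, ρα, αρα, απ`. -/
theorem AH2_frobeniusPerron_dimensions
    (A : Type) [Ring A] (α ρ π η : A)
    (hαα : α * α = 1)
    (hπα : π * α = α * π)
    (hαη : α * η = η) (hηα : η * α = η)
    (hραρ : ρ * α * ρ = α * ρ * α + η)
    (hρρ : ρ * ρ = 1 + ρ + π)
    (hρπ : ρ * π = ρ + π + α * π + η)
    (hπρ : π * ρ = ρ + π + α * π + η)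
    (hρη : ρ * η = α * ρ + α * ρ * α + π + α * π + η)
    (hηρ : η * ρ = ρ * α + α * ρ * α + π + α * π + η)
    (hππ : π * π = 1 + ρ + α * ρ + ρ * α + α * ρ * α + 2 * π + 2 * (α * π) + 2 * η)
    (hπη : π * η = ρ + α * ρ + ρ * α + α * ρ * α + 2 * π + 2 * (α * π) + 3 * η)
    (hηπ : η * π = ρ + α * ρ + ρ * α + α * ρ * α + 2 * π + 2 * (α * π) + 3 * η)
    (hηη : η * η = 1 + α + ρ + α * ρ + ρ * α + α * ρ * α + 3 * π + 3 * (α * π) + 2 * η)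
    (d : A →+* ℝ)
    (hd1 : 0 < d 1) (hdα : 0 < d α) (hdρ : 0 < d ρ)
    (hdαρ : 0 < d (α * ρ)) (hdρα : 0 < d (ρ * α)) (hdαρα : 0 < d (α * ρ * α))
    (hdπ : 0 < d π) (hdαπ : 0 < d (α * π)) (hdη : 0 < d η) :
    d 1 = 1 ∧ d α = 1 ∧
      d ρ = (3 + Real.sqrt 17) / 2 ∧ d (α * ρ) = (3 + Real.sqrt 17) / 2 ∧
      d (ρ * α) = (3 + Real.sqrt 17) / 2 ∧ d (α * ρ * α) = (3 + Real.sqrt 17) / 2 ∧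
      d π = 4 + Real.sqrt 17 ∧ d (α * π) = 4 + Real.sqrt 17 ∧
      d η = 5 + Real.sqrt 17 := by
  have ha : d α = 1 := by
    have h := congrArg d hαα
    simp only [map_mul, map_one] at h
    nlinarith
  have h1 := congrArg d hραρ
  have h2 := congrArg d hρρ
  have h3 := congrArg d hρπ
  simp only [map_mul, map_add, map_one, ha, mul_one, one_mul] at h1 h2 h3 ⊢
  have he : d η = 1 + d π := by linarith
  have hp : d π = d ρ * d ρ - d ρ - 1 := by linarith
  have hne : d ρ - 1 ≠ 0 := by
    intro h
    have hr1 : d ρ = 1 := by linarith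
    rw [hr1] at hp
    linarith
  have hquad : d ρ * d ρ - 3 * d ρ - 2 = 0 := by
    apply mul_left_cancel₀ hne
    rw [he, hp] at h3
    linarith
  have hsq : Real.sqrt 17 * Real.sqrt 17 = 17 := Real.mul_self_sqrt (by norm_num)
  have hs : 3 < Real.sqrt 17 := Real.lt_sqrt_of_sq_lt (by norm_num)
  have hr : d ρ = (3 + Real.sqrt 17) / 2 := by
    have hfac : (d ρ - (3 + Real.sqrt 17) / 2) * (d ρ - (3 - Real.sqrt 17) / 2) = 0 := by
      linarith
    -- The conjugate root `(3 - √17) / 2` is negative, so the second factor is positive.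
    have hpos : d ρ - (3 - Real.sqrt 17) / 2 ≠ 0 := by
      apply ne_of_gt
      linarith
    linarith [(mul_eq_zero.mp hfac).resolve_right hpos]
  have hp' : d π = 4 + Real.sqrt 17 := by linarith
  have he' : d η = 5 + Real.sqrt 17 := by linarith
  exact ⟨trivial, trivial, hr, hr, hr, hr, hp', hp', he'⟩
end

section
/- Any ring homomorphism d : AH3 → ℝ with d(x) > 0 for every basis element x satisfies d(1) = d(β) = 1, d(ξ) = d(βξ) = d(ξβ) = d(βξβ) = (5+√17)/2, d(μ) = d(βμ) = 4+√17, and d(ν) = 3+√17. -/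
/-!
Since `d β` is positive with square `1`, it equals `1`, so only `x = d ξ`, `m = d μ` and
`n = d ν` remain. The relations for `ξβξ` and `ξ²` become `x² = x + 2m` and
`x² = 1 + x + m + n`, so `n = m - 1`; the relation for `ξν` then gives
`(x + 1)(x² - 5x + 2) = 0`. Positivity of `x` leaves the quadratic factor, whence `m = 2x - 1`
and `(2x - 5)² = 17`. The smaller root is excluded because it would give `m = 4 - √17 < 0`.
-/

/-- Any ring homomorphism `d : AH3 → ℝ` which is positive on every basis
element satisfies `d 1 = d β = 1`, `d ξ = d (βξ) = d (ξβ) = d (βξβ) = (5+√17)/2`,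
`d μ = d (βμ) = 4+√17` and `d ν = 3+√17`.  Here `AH3` is any ring containing elements
`β, ξ, μ, ν` satisfying the defining `AH3` relations, and the remaining basis elements are
the words `βξ, ξβ, βξβ, βμ`. -/
theorem AH3_frobeniusPerron_dimensions
    (A : Type) [Ring A] (β ξ μ ν : A)
    (hββ : β * β = 1)
    (hμβ : μ * β = β * μ)
    (hβν : β * ν = ν) (hνβ : ν * β = ν)
    (hξβξ : ξ * β * ξ = β * ξ * β + μ + β * μ)
    (hξξ : ξ * ξ = 1 + ξ + μ + ν)
    (hξμ : ξ * μ = ξ + β * ξ + β * ξ * β + μ + β * μ + ν)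
    (hμξ : μ * ξ = ξ + ξ * β + β * ξ * β + μ + β * μ + ν)
    (hξν : ξ * ν = ξ + ξ * β + μ + β * μ + ν)
    (hνξ : ν * ξ = ξ + β * ξ + μ + β * μ + ν)
    (hμμ : μ * μ = 1 + ξ + β * ξ + ξ * β + β * ξ * β + 2 * μ + 2 * (β * μ) + 2 * ν)
    (hμν : μ * ν = ξ + β * ξ + ξ * β + β * ξ * β + 2 * μ + 2 * (β * μ) + ν)
    (hνμ : ν * μ = ξ + β * ξ + ξ * β + β * ξ * β + 2 * μ + 2 * (β * μ) + ν)
    (hνν : ν * ν = 1 + β + ξ + β * ξ + ξ * β + β * ξ * β + μ + β * μ + 2 * ν)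
    (d : A →+* ℝ)
    (hd1 : 0 < d 1) (hdβ : 0 < d β) (hdξ : 0 < d ξ)
    (hdβξ : 0 < d (β * ξ)) (hdξβ : 0 < d (ξ * β)) (hdβξβ : 0 < d (β * ξ * β))
    (hdμ : 0 < d μ) (hdβμ : 0 < d (β * μ)) (hdν : 0 < d ν) :
    d 1 = 1 ∧ d β = 1 ∧
      d ξ = (5 + Real.sqrt 17) / 2 ∧ d (β * ξ) = (5 + Real.sqrt 17) / 2 ∧
      d (ξ * β) = (5 + Real.sqrt 17) / 2 ∧ d (β * ξ * β) = (5 + Real.sqrt 17) / 2 ∧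
      d μ = 4 + Real.sqrt 17 ∧ d (β * μ) = 4 + Real.sqrt 17 ∧
      d ν = 3 + Real.sqrt 17 := by
  have hb : d β = 1 := by
    have h := congrArg d hββ
    simp only [map_mul, map_one] at h
    nlinarith
  have h1 := congrArg d hξβξ
  have h2 := congrArg d hξξ
  have h3 := congrArg d hξν
  simp only [map_mul, map_add, map_one, hb, one_mul, mul_one] at h1 h2 h3 ⊢
  have hn : d ν = d μ - 1 := by linarith
  have hm : d μ = (d ξ * d ξ - d ξ) / 2 := by linarith
  have hquad : d ξ * d ξ - 5 * d ξ + 2 = 0 := by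
    have hcubic : (d ξ + 1) * (d ξ * d ξ - 5 * d ξ + 2) = 0 := by
      rw [hn, hm] at h3
      linarith
    exact (mul_eq_zero.mp hcubic).resolve_left (by linarith)
  have hs : Real.sqrt 17 = 2 * d ξ - 5 := by
    have hsq : Real.sqrt 17 * Real.sqrt 17 = 17 := Real.mul_self_sqrt (by norm_num)
    have hs4 : 4 < Real.sqrt 17 := Real.lt_sqrt_of_sq_lt (by norm_num)
    have hprod : (Real.sqrt 17 - (2 * d ξ - 5)) * (Real.sqrt 17 + (2 * d ξ - 5)) = 0 := by
      linarith
    -- The second factor equals `√17 - 4 + d μ`, which is positive.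
    linarith [(mul_eq_zero.mp hprod).resolve_right (by linarith)]
  rw [hs]
  refine ⟨trivial, trivial, ?_, ?_, ?_, ?_, ?_, ?_, ?_⟩ <;> linarith
end

section
/- Let d₁, d₂, d₃ be ring homomorphisms from AH1, AH2, AH3 respectively to ℝ that are positive on all basis elements. Then the sums of the squares of the values of dᵢ on the basis elements (the global Frobenius–Perron dimensions) are equal for the three rings and equal 136 + 32√17; that is, Σ_{x ∈ basis of AH1} d₁(x)² = Σ_{x ∈ basis of AH2} d₂(x)² = Σ_{x ∈ basis of AH3} d₃(x)² = 136 + 32√17. -/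
/-!
A positive character of each ring is pinned down by a few rows of the multiplication table: every
value is a polynomial in the value of one generator, and that generator satisfies a cubic with a
rational root which positivity excludes, so it is the positive (or larger) root of a quadratic.

* AH1: with `p = d ψ` one gets `(p - 2) (p² - 3p - 2) = 0` and `d σ = p (p - 2) > 0`. Hence
  `p = (3 + √17) / 2`, and the values on `1, ψ, χ, σ, ζ, τ` are
  `1, p, p + 1, p + 2, 2p + 1, 3p + 1`.
* AH2: `d α = 1`, and with `r = d ρ` one gets `(r - 1) (r² - 3r - 2) = 0`, where `r = 1` would give
  `d π = -1`. Hence `r = (3 + √17) / 2`, `d π = 2r + 1` and `d η = 2r + 2`.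
* AH3: `d β = 1`, and with `x = d ξ` one gets `(x + 1) (x² - 5x + 2) = 0`, `d μ = 2x - 1` and
  `d ν = 2x - 2 > 0`. Hence `x = (5 + √17) / 2`.
-/

/-- The values on the simple objects of AH1 solve the relations for multiplication by `ψ`; these
relations alone determine the positive solution. -/
lemma AH1_global_dimension {p c s z t : ℝ} (hp : 0 < p) (hs : 0 < s)
    (hpp : p * p = 1 + p + z) (hpc : p * c = c + t) (hps : p * s = z + t)
    (hpz : p * z = p + s + z + t) (hpt : p * t = c + s + z + 2 * t) :
    1 ^ 2 + p ^ 2 + c ^ 2 + s ^ 2 + z ^ 2 + t ^ 2 = 136 + 32 * Real.sqrt 17 := by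
  have hz : z = p ^ 2 - p - 1 := by linarith
  have hs' : s = p * (p - 2) := by
    apply mul_left_cancel₀ (show p + 1 ≠ 0 by positivity)
    rw [hz] at hps hpz
    linear_combination hps - hpz
  have hp2 : 0 < p - 2 := pos_of_mul_pos_right (hs' ▸ hs) hp.le
  have ht : t = (p - 1) * (p ^ 2 - 2 * p - 1) := by
    rw [hz, hs'] at hps
    linear_combination -hps
  have hc : c = p ^ 2 - 2 * p - 1 := by
    apply mul_left_cancel₀ (show p - 1 ≠ 0 by linarith)
    linear_combination hpc + ht
  have hq : p ^ 2 - 3 * p - 2 = 0 := by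
    apply mul_left_cancel₀ (show p * (p - 2) ≠ 0 by positivity)
    rw [ht, hc, hs', hz] at hpt
    linear_combination hpt
  have hsq : Real.sqrt 17 = 2 * p - 3 := by
    rw [Real.sqrt_eq_iff_mul_self_eq (by norm_num) (by linarith)]
    linear_combination -4 * hq
  have hz' : z = 2 * p + 1 := by linear_combination hz + hq
  have hs'' : s = p + 2 := by linear_combination hs' + hq
  have hc' : c = p + 1 := by linear_combination hc + hq
  have ht' : t = 3 * p + 1 := by linear_combination ht + p * hq
  rw [hsq, hz', hs'', hc', ht']
  linear_combination 16 * hq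

/-- The relations of AH2 for multiplication by `ρ`, after substituting `d α = 1`, determine the
positive solution. -/
lemma AH2_global_dimension {r p h : ℝ} (hr : 0 < r) (hp : 0 < p)
    (hrar : r * r = r + h) (hrr : r * r = 1 + r + p) (hrp : r * p = r + p + p + h) :
    2 + 4 * r ^ 2 + 2 * p ^ 2 + h ^ 2 = 136 + 32 * Real.sqrt 17 := by
  have hp' : p = r ^ 2 - r - 1 := by linarith
  have hh : h = r ^ 2 - r := by linarith
  have hr1 : r - 1 ≠ 0 := by
    intro h1
    have : r = 1 := by linarith
    subst this
    linarith
  have hq : r ^ 2 - 3 * r - 2 = 0 := by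
    apply mul_left_cancel₀ hr1
    rw [hp', hh] at hrp
    linear_combination hrp
  have hp'' : p = 2 * r + 1 := by linear_combination hp' + hq
  have hh' : h = 2 * r + 2 := by linear_combination hh + hq
  have hsq : Real.sqrt 17 = 2 * r - 3 := by
    rw [Real.sqrt_eq_iff_mul_self_eq (by norm_num) (by nlinarith)]
    linear_combination -4 * hq
  rw [hsq, hp'', hh']
  linear_combination 16 * hq

/-- The relations of AH3 for multiplication by `ξ`, after substituting `d β = 1`, determine the
positive solution; positivity of `d ν` selects the larger root of `x² - 5x + 2`. -/
lemma AH3_global_dimension {x m n : ℝ} (hx : 0 < x) (hn : 0 < n)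
    (hxbx : x * x = x + m + m) (hxx : x * x = 1 + x + m + n)
    (hxm : x * m = x + x + x + m + m + n) :
    2 + 4 * x ^ 2 + 2 * m ^ 2 + n ^ 2 = 136 + 32 * Real.sqrt 17 := by
  have hm : m = (x ^ 2 - x) / 2 := by linarith
  have hn' : n = (x ^ 2 - x) / 2 - 1 := by linarith
  have hq : x ^ 2 - 5 * x + 2 = 0 := by
    apply mul_left_cancel₀ (show x + 1 ≠ 0 by positivity)
    rw [hm, hn'] at hxm
    linear_combination 2 * hxm
  have hm' : m = 2 * x - 1 := by linear_combination hm + hq / 2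
  have hn'' : n = 2 * x - 2 := by linear_combination hn' + hq / 2
  have hsq : Real.sqrt 17 = 2 * x - 5 := by
    rw [Real.sqrt_eq_iff_mul_self_eq (by norm_num) (by nlinarith)]
    linear_combination -4 * hq
  rw [hsq, hm', hn'']
  linear_combination 16 * hq

/-- A character takes the value `1` on an involution where it is positive. -/
lemma map_involution_eq_one {A : Type} [Ring A] (d : A →+* ℝ) {a : A} (ha : a * a = 1)
    (hpos : 0 < d a) : d a = 1 := by
  have h := congrArg d ha
  rw [map_mul, map_one] at h
  nlinarith

/-- Let `d₁, d₂, d₃` be ring homomorphisms to `ℝ` from the rings `AH1, AH2,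
AH3` respectively (presented here by elements satisfying the full multiplication tables of the
three Asaeda–Haagerup fusion rings), positive on all basis elements.  Then the sums of the
squares of the values on the basis elements — the global Frobenius–Perron dimensions — agree
for the three rings, and all equal `136 + 32√17`. -/
theorem AH_global_dimensions_equal
    -- the ring AH1
    (A₁ : Type) [Ring A₁] (ψ χ σ ζ τ : A₁)
    (hψψ : ψ * ψ = 1 + ψ + ζ)
    (hψχ : ψ * χ = χ + τ)
    (hψσ : ψ * σ = ζ + τ)
    (hψζ : ψ * ζ = ψ + σ + ζ + τ)
    (hψτ : ψ * τ = χ + σ + ζ + 2 * τ)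
    (hχχ : χ * χ = 1 + ψ + χ + τ)
    (hχσ : χ * σ = σ + ζ + τ)
    (hχζ : χ * ζ = σ + ζ + 2 * τ)
    (hχτ : χ * τ = ψ + χ + σ + 2 * ζ + 2 * τ)
    (hσσ : σ * σ = 1 + χ + σ + ζ + τ)
    (hσζ : σ * ζ = ψ + χ + σ + ζ + 2 * τ)
    (hστ : σ * τ = ψ + χ + σ + 2 * ζ + 3 * τ)
    (hζζ : ζ * ζ = 1 + ψ + χ + σ + 2 * ζ + 3 * τ)
    (hζτ : ζ * τ = ψ + 2 * χ + 2 * σ + 3 * ζ + 4 * τ)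
    (hττ : τ * τ = 1 + 2 * ψ + 2 * χ + 3 * σ + 4 * ζ + 6 * τ)
    (d₁ : A₁ →+* ℝ)
    (hd₁ : 0 < d₁ 1 ∧ 0 < d₁ ψ ∧ 0 < d₁ χ ∧ 0 < d₁ σ ∧ 0 < d₁ ζ ∧ 0 < d₁ τ)
    -- the ring AH2
    (A₂ : Type) [Ring A₂] (α ρ π η : A₂)
    (hαα : α * α = 1)
    (hπα : π * α = α * π)
    (hαη : α * η = η) (hηα : η * α = η)
    (hραρ : ρ * α * ρ = α * ρ * α + η)
    (hρρ : ρ * ρ = 1 + ρ + π)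
    (hρπ : ρ * π = ρ + π + α * π + η)
    (hπρ : π * ρ = ρ + π + α * π + η)
    (hρη : ρ * η = α * ρ + α * ρ * α + π + α * π + η)
    (hηρ : η * ρ = ρ * α + α * ρ * α + π + α * π + η)
    (hππ : π * π = 1 + ρ + α * ρ + ρ * α + α * ρ * α + 2 * π + 2 * (α * π) + 2 * η)
    (hπη : π * η = ρ + α * ρ + ρ * α + α * ρ * α + 2 * π + 2 * (α * π) + 3 * η)
    (hηπ : η * π = ρ + α * ρ + ρ * α + α * ρ * α + 2 * π + 2 * (α * π) + 3 * η)
    (hηη : η * η = 1 + α + ρ + α * ρ + ρ * α + α * ρ * α + 3 * π + 3 * (α * π) + 2 * η)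
    (d₂ : A₂ →+* ℝ)
    (hd₂ : 0 < d₂ 1 ∧ 0 < d₂ α ∧ 0 < d₂ ρ ∧ 0 < d₂ (α * ρ) ∧ 0 < d₂ (ρ * α) ∧
      0 < d₂ (α * ρ * α) ∧ 0 < d₂ π ∧ 0 < d₂ (α * π) ∧ 0 < d₂ η)
    -- the ring AH3
    (A₃ : Type) [Ring A₃] (β ξ μ ν : A₃)
    (hββ : β * β = 1)
    (hμβ : μ * β = β * μ)
    (hβν : β * ν = ν) (hνβ : ν * β = ν)
    (hξβξ : ξ * β * ξ = β * ξ * β + μ + β * μ)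
    (hξξ : ξ * ξ = 1 + ξ + μ + ν)
    (hξμ : ξ * μ = ξ + β * ξ + β * ξ * β + μ + β * μ + ν)
    (hμξ : μ * ξ = ξ + ξ * β + β * ξ * β + μ + β * μ + ν)
    (hξν : ξ * ν = ξ + ξ * β + μ + β * μ + ν)
    (hνξ : ν * ξ = ξ + β * ξ + μ + β * μ + ν)
    (hμμ : μ * μ = 1 + ξ + β * ξ + ξ * β + β * ξ * β + 2 * μ + 2 * (β * μ) + 2 * ν)
    (hμν : μ * ν = ξ + β * ξ + ξ * β + β * ξ * β + 2 * μ + 2 * (β * μ) + ν)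
    (hνμ : ν * μ = ξ + β * ξ + ξ * β + β * ξ * β + 2 * μ + 2 * (β * μ) + ν)
    (hνν : ν * ν = 1 + β + ξ + β * ξ + ξ * β + β * ξ * β + μ + β * μ + 2 * ν)
    (d₃ : A₃ →+* ℝ)
    (hd₃ : 0 < d₃ 1 ∧ 0 < d₃ β ∧ 0 < d₃ ξ ∧ 0 < d₃ (β * ξ) ∧ 0 < d₃ (ξ * β) ∧
      0 < d₃ (β * ξ * β) ∧ 0 < d₃ μ ∧ 0 < d₃ (β * μ) ∧ 0 < d₃ ν) :
    d₁ 1 ^ 2 + d₁ ψ ^ 2 + d₁ χ ^ 2 + d₁ σ ^ 2 + d₁ ζ ^ 2 + d₁ τ ^ 2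
        = 136 + 32 * Real.sqrt 17 ∧
    d₂ 1 ^ 2 + d₂ α ^ 2 + d₂ ρ ^ 2 + d₂ (α * ρ) ^ 2 + d₂ (ρ * α) ^ 2 + d₂ (α * ρ * α) ^ 2 +
        d₂ π ^ 2 + d₂ (α * π) ^ 2 + d₂ η ^ 2 = 136 + 32 * Real.sqrt 17 ∧
    d₃ 1 ^ 2 + d₃ β ^ 2 + d₃ ξ ^ 2 + d₃ (β * ξ) ^ 2 + d₃ (ξ * β) ^ 2 + d₃ (β * ξ * β) ^ 2 +
        d₃ μ ^ 2 + d₃ (β * μ) ^ 2 + d₃ ν ^ 2 = 136 + 32 * Real.sqrt 17 := by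
  obtain ⟨-, hψ, -, hσ, -, -⟩ := hd₁
  obtain ⟨-, hα, hρ, -, -, -, hπ, -, -⟩ := hd₂
  obtain ⟨-, hβ, hξ, -, -, -, -, -, hν⟩ := hd₃
  have hα1 := map_involution_eq_one d₂ hαα hα
  have hβ1 := map_involution_eq_one d₃ hββ hβ
  refine ⟨?_, ?_, ?_⟩
  · rw [map_one]
    apply AH1_global_dimension hψ hσ
    · simpa using congrArg d₁ hψψ
    · simpa using congrArg d₁ hψχ
    · simpa using congrArg d₁ hψσ
    · simpa using congrArg d₁ hψζ
    · simpa only [map_mul, map_add, map_ofNat] using congrArg d₁ hψτ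
  · have key := AH2_global_dimension (h := d₂ η) hρ hπ
      (by simpa [hα1] using congrArg d₂ hραρ)
      (by simpa only [map_mul, map_add, map_one] using congrArg d₂ hρρ)
      (by simpa only [map_mul, map_add, hα1, one_mul] using congrArg d₂ hρπ)
    simp only [map_mul, map_one, hα1, one_mul, mul_one]
    linear_combination key
  · have key := AH3_global_dimension (m := d₃ μ) hξ hν
      (by simpa only [map_mul, map_add, hβ1, one_mul, mul_one] using congrArg d₃ hξβξ)
      (by simpa only [map_mul, map_add, map_one] using congrArg d₃ hξξ)
      (by simpa only [map_mul, map_add, hβ1, one_mul, mul_one] using congrArg d₃ hξμ)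
    simp only [map_mul, map_one, hβ1, one_mul, mul_one]
    linear_combination key
end

section
/- Let β = √((7+√17)/2) and, for an integer n, let β_n = √((7+√17)/2 − n). Then each of the following five real 2×2 matrices is orthogonal (i.e. M·Mᵀ = I): M₁ = (1/β₁²)·[[−1, β·β₂],[β·β₂, 1]]; M₂ = (1/β₋₁)·[[−1, β],[−β, −1]]; M₃ = (1/(β₁β₃))·[[−β₅, √2·β],[√2·β, β₅]]; M₄ = (1/β₋₁)·[[2, −β₃],[β₃, 2]]; M₅ = [[2/β₁², √2·β₋₁/(β₁β₂)],[−√2·β₋₁/(β₁β₂), 2/β₁²]]. -/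
/-!
Put `x = β² = (7+√17)/2`, so that `x² = 7x − 8`, `β_n² = x − n`, and `x > 5`.
Every block is a scalar multiple of a rotation `[[a, b], [-b, a]]` or a reflection
`[[-a, b], [b, a]]`, so orthogonality amounts to one equation on squares of entries:
* `M₁`: `1 + x(x − 2) = (x − 1)²`;
* `M₂`: `1 + x = x + 1`;
* `M₃`: `(x − 5) + 2x = (x − 1)(x − 3)`;
* `M₄`: `4 + (x − 3) = x + 1`;
* `M₅`: `4(x − 2) + 2(x + 1)(x − 1) = (x − 1)²(x − 2)`.

The third and fifth use `x² = 7x − 8`; the others are identities in `x`.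
-/

open Real Matrix

/-- `β = √((7+√17)/2)`. -/
noncomputable def ahβ : ℝ := Real.sqrt ((7 + Real.sqrt 17) / 2)

/-- `β_n = √((7+√17)/2 − n)` for an integer `n`. -/
noncomputable def ahβn (n : ℤ) : ℝ := Real.sqrt ((7 + Real.sqrt 17) / 2 - n)

/-- The five nontrivial `2×2` blocks of the connection for the generating bimodule of the
`AH+1` subfactor. -/
noncomputable def ahM₁ : Matrix (Fin 2) (Fin 2) ℝ :=
  (1 / (ahβn 1) ^ 2) • !![-1, ahβ * ahβn 2; ahβ * ahβn 2, 1]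

noncomputable def ahM₂ : Matrix (Fin 2) (Fin 2) ℝ :=
  (1 / ahβn (-1)) • !![-1, ahβ; -ahβ, -1]

noncomputable def ahM₃ : Matrix (Fin 2) (Fin 2) ℝ :=
  (1 / (ahβn 1 * ahβn 3)) • !![-(ahβn 5), Real.sqrt 2 * ahβ; Real.sqrt 2 * ahβ, ahβn 5]

noncomputable def ahM₄ : Matrix (Fin 2) (Fin 2) ℝ :=
  (1 / ahβn (-1)) • !![2, -(ahβn 3); ahβn 3, 2]

noncomputable def ahM₅ : Matrix (Fin 2) (Fin 2) ℝ :=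
  !![2 / (ahβn 1) ^ 2, Real.sqrt 2 * ahβn (-1) / (ahβn 1 * ahβn 2);
     -(Real.sqrt 2 * ahβn (-1) / (ahβn 1 * ahβn 2)), 2 / (ahβn 1) ^ 2]

lemma ahβ_sq : ahβ ^ 2 = (7 + √17) / 2 :=
  Real.sq_sqrt (by positivity)

lemma ahβ_sq_gt : 5 < ahβ ^ 2 := by
  have h : (3 : ℝ) < √17 := Real.lt_sqrt_of_sq_lt (by norm_num)
  rw [ahβ_sq]
  linarith

/-- The quadratic equation `x² = 7x − 8` for `x = β²`. -/
lemma ahβ_sq_quadratic : (ahβ ^ 2) ^ 2 = 7 * ahβ ^ 2 - 8 := by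
  have h : √(17 : ℝ) ^ 2 = 17 := Real.sq_sqrt (by norm_num)
  rw [ahβ_sq]
  linear_combination h / 4

lemma ahβn_sq {n : ℤ} (hn : n ≤ 5) : ahβn n ^ 2 = ahβ ^ 2 - n := by
  have hn' : (n : ℝ) ≤ 5 := by exact_mod_cast hn
  have h := ahβ_sq_gt
  rw [ahβ_sq] at h ⊢
  exact Real.sq_sqrt (by linarith)

lemma ahβn_ne_zero {n : ℤ} (hn : n ≤ 5) : ahβn n ≠ 0 := by
  have hn' : (n : ℝ) ≤ 5 := by exact_mod_cast hn
  have h := ahβ_sq_gt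
  rw [← sq_pos_iff, ahβn_sq hn]
  linarith

lemma scaled_rotation_orthogonal {a b c : ℝ} (hc : c ≠ 0) (h : a ^ 2 + b ^ 2 = c ^ 2) :
    ((1 / c) • !![a, b; -b, a]) * ((1 / c) • !![a, b; -b, a])ᵀ = 1 := by
  ext i j
  fin_cases i <;> fin_cases j <;> simp [Matrix.mul_apply, Fin.sum_univ_two] <;> field_simp <;>
    first | ring1 | linear_combination h

lemma scaled_reflection_orthogonal {a b c : ℝ} (hc : c ≠ 0) (h : a ^ 2 + b ^ 2 = c ^ 2) :
    ((1 / c) • !![-a, b; b, a]) * ((1 / c) • !![-a, b; b, a])ᵀ = 1 := by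
  ext i j
  fin_cases i <;> fin_cases j <;> simp [Matrix.mul_apply, Fin.sum_univ_two] <;> field_simp <;>
    first | ring1 | linear_combination h

/-- Each of the five `2×2` blocks of the `AH+1` connection is an orthogonal
matrix, i.e. `M * Mᵀ = 1`. -/
theorem ahPlusOne_connection_blocks_orthogonal :
    ahM₁ * ahM₁ᵀ = 1 ∧ ahM₂ * ahM₂ᵀ = 1 ∧ ahM₃ * ahM₃ᵀ = 1 ∧
      ahM₄ * ahM₄ᵀ = 1 ∧ ahM₅ * ahM₅ᵀ = 1 := by
  have hq := ahβ_sq_quadratic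
  have h2 : √(2 : ℝ) ^ 2 = 2 := Real.sq_sqrt (by norm_num)
  have sm1 : ahβn (-1) ^ 2 = ahβ ^ 2 + 1 := by rw [ahβn_sq (by norm_num)]; push_cast; ring
  have s1 : ahβn 1 ^ 2 = ahβ ^ 2 - 1 := by rw [ahβn_sq (by norm_num)]; norm_num
  have s2 : ahβn 2 ^ 2 = ahβ ^ 2 - 2 := by rw [ahβn_sq (by norm_num)]; norm_num
  have s3 : ahβn 3 ^ 2 = ahβ ^ 2 - 3 := by rw [ahβn_sq (by norm_num)]; norm_num
  have s5 : ahβn 5 ^ 2 = ahβ ^ 2 - 5 := by rw [ahβn_sq (by norm_num)]; norm_num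
  have nm1 : ahβn (-1) ≠ 0 := ahβn_ne_zero (by norm_num)
  have n1 : ahβn 1 ≠ 0 := ahβn_ne_zero (by norm_num)
  have n2 : ahβn 2 ≠ 0 := ahβn_ne_zero (by norm_num)
  have n3 : ahβn 3 ≠ 0 := ahβn_ne_zero (by norm_num)
  refine ⟨?_, ?_, ?_, ?_, ?_⟩
  · refine scaled_reflection_orthogonal (pow_ne_zero 2 n1) ?_
    rw [mul_pow, s1, s2]
    ring
  · refine scaled_rotation_orthogonal nm1 ?_
    rw [sm1]
    ring
  · refine scaled_reflection_orthogonal (mul_ne_zero n1 n3) ?_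
    rw [mul_pow, mul_pow, h2, s1, s3, s5]
    linear_combination -hq
  · have hM : ahM₄ = (1 / ahβn (-1)) • !![2, -ahβn 3; -(-ahβn 3), 2] := by
      rw [neg_neg, ahM₄]
    rw [hM]
    refine scaled_rotation_orthogonal nm1 ?_
    rw [neg_sq, sm1, s3]
    ring
  · have hM : ahM₅ = (1 / (1 : ℝ)) • ahM₅ := by simp
    rw [hM]
    refine scaled_rotation_orthogonal one_ne_zero ?_
    have d1 : ahβ ^ 2 - 1 ≠ 0 := s1 ▸ pow_ne_zero 2 n1
    have d2 : ahβ ^ 2 - 2 ≠ 0 := s2 ▸ pow_ne_zero 2 n2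
    rw [div_pow _ (ahβn 1 * ahβn 2), mul_pow, mul_pow, h2, sm1, s1, s2]
    generalize ahβ ^ 2 = x at hq d1 d2
    field_simp
    linear_combination -(x + 1) * hq
end
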